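/- Let T = {t_1, ..., t_M} be a finite set and (f(t_1), ..., f(t_M)) a centered Gaussian random vector with Var(f(t_i)) = 1 for every i, defined under a probability measure P. Let σ, σ' : T → (0, ∞) with σ'(t_i) ≤ σ(t_i) for all i and max_i σ'(t_i) < max_i σ(t_i), and take the mean functions μ = μ' ≡ 0. Let Q† be the probability measure with dQ†/dP = [Σ_{i=1}^M 1{σ(t_i)f(t_i) > b}] / [Σ_{i=1}^M P(σ(t_i)f(t_i) > b)]. Then there exists a constant ε > 0 such that lim_{b→∞} E^{Q†}[ (dP/dQ†)² · 1{max_i σ'(t_i)f(t_i) > b} ] / w_{σ',0}(b)^{2−ε} = ∞, where w_{σ',0}(b) = P(max_i σ'(t_i)f(t_i) > b). -/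

import Mathlib

open MeasureTheory ProbabilityTheory Filter Set

lemma aux_upper (x : ℝ) (hx : 0 ≤ x) :
    (gaussianReal 0 1).real (Ioi x) ≤ Real.exp (-(x ^ 2 / 2)) := by
  have h := measure_ge_le_exp_mul_mgf (μ := gaussianReal 0 1) (X := id) x hx
    (integrable_exp_mul_gaussianReal x)
  rw [mgf_id_gaussianReal, ← Real.exp_add] at h
  refine (measureReal_mono (fun y hy => ?_)).trans (h.trans (le_of_eq ?_))
  · exact le_of_lt (mem_Ioi.1 hy)
  · congr 1
    simp
    ring

lemma aux_lower : ∃ c > (0 : ℝ), ∀ x : ℝ, 0 ≤ x →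
    c * Real.exp (-((x + 1) ^ 2 / 2)) ≤ (gaussianReal 0 1).real (Ioi x) := by
  refine ⟨(Real.sqrt (2 * Real.pi * (1 : NNReal)))⁻¹, by positivity, fun x hx => ?_⟩
  have h1 : (gaussianReal 0 1).real (Ioc x (x + 1)) ≤ (gaussianReal 0 1).real (Ioi x) :=
    measureReal_mono (fun y hy => hy.1)
  refine le_trans ?_ h1
  rw [measureReal_def, gaussianReal_apply_eq_integral _ one_ne_zero, ENNReal.toReal_ofReal
    (integral_nonneg (gaussianPDFReal_nonneg _ _))]
  have h2 := setIntegral_ge_of_const_le_real (μ := volume) (s := Ioc x (x + 1))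
    (f := gaussianPDFReal 0 1)
    (c := (Real.sqrt (2 * Real.pi * (1 : NNReal)))⁻¹ * Real.exp (-((x + 1) ^ 2 / 2)))
    measurableSet_Ioc (by simp) ?_ (integrable_gaussianPDFReal _ _).integrableOn
  · simpa using h2
  · intro y hy
    rw [gaussianPDFReal]
    gcongr
    simp only [sub_zero, NNReal.coe_one, mul_one, neg_div]
    have : y ^ 2 ≤ (x + 1) ^ 2 := by
      have := hy.1
      have := hy.2
      gcongr
      linarith
    linarith

lemma aux_prob {Ω : Type*} [MeasurableSpace Ω] (P : Measure Ω) (g : Ω → ℝ) (hg : Measurable g)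
    (hstd : Measure.map g P = gaussianReal 0 1) (s b : ℝ) (hs : 0 < s) :
    (P {ω | s * g ω > b}).toReal = (gaussianReal 0 1).real (Ioi (b / s)) := by
  rw [← hstd, measureReal_def, Measure.map_apply hg measurableSet_Ioi]
  congr 2
  ext ω
  simp [div_lt_iff₀ hs, mul_comm]

lemma aux_tendsto (k s : ℝ) (hk : 0 < k) :
    Tendsto (fun b : ℝ => (k + 1 / (2 * s ^ 2)) * b ^ 2 - (b / s + 1) ^ 2 / 2) atTop atTop := by
  have h1 : Tendsto (fun b : ℝ => k * b + (-(1 / s))) atTop atTop :=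
    tendsto_atTop_add_const_right _ _ (tendsto_id.const_mul_atTop hk)
  have h2 := tendsto_atTop_add_const_right atTop (-(1 / 2) : ℝ) (tendsto_id.atTop_mul_atTop₀ h1)
  refine h2.congr (fun b => ?_)
  simp only [id]
  by_cases hs : s = 0
  · subst hs
    simp
    ring
  · field_simp
    ring

lemma aux_integral {Ω : Type*} [MeasurableSpace Ω] (P : Measure Ω) [IsProbabilityMeasure P]
    (A : Set Ω) (hA : MeasurableSet A) (N : Ω → ℝ) (hN : Measurable N) (D M : ℝ) (hD : 0 < D)
    (hN1 : ∀ ω ∈ A, 1 ≤ N ω) (hNM : ∀ ω, N ω ≤ M) :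
    D / M * (P A).toReal ≤
      ∫ ω in A, (D / N ω) ^ 2 ∂(P.withDensity fun ω => ENNReal.ofReal (N ω / D)) := by
  rw [setIntegral_withDensity_eq_setIntegral_toReal_smul (by fun_prop) (by simp) _ hA]
  have : ∫ ω in A, (ENNReal.ofReal (N ω / D)).toReal • (D / N ω) ^ 2 ∂P
      = ∫ ω in A, D / N ω ∂P := by
    refine setIntegral_congr_fun hA (fun ω hω => ?_)
    have h1 : 0 < N ω := lt_of_lt_of_le one_pos (hN1 ω hω)
    simp only [smul_eq_mul]
    rw [ENNReal.toReal_ofReal (by positivity)]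
    field_simp
  rw [this]
  refine setIntegral_ge_of_const_le_real hA (measure_ne_top _ _) (fun ω hω => ?_) ?_
  · have h1 : 0 < N ω := lt_of_lt_of_le one_pos (hN1 ω hω)
    exact div_le_div_of_nonneg_left hD.le h1 (hNM ω)
  · refine Measure.integrableOn_of_bounded (M := D) (measure_ne_top _ _)
      (measurable_const.div hN).aestronglyMeasurable ?_
    filter_upwards [ae_restrict_mem hA] with ω hω
    have h1 := hN1 ω hω
    rw [Real.norm_eq_abs, abs_of_nonneg (by positivity)]
    exact div_le_self hD.le h1

/-- **Non-uniform efficiency of the Adler–Blanchet–Liu change of measure (part i).**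
`T = {t_1, …, t_M}` is modelled by a nonempty finite index type `ι`, and
`(f i)_{i ∈ ι}` is a centered Gaussian random vector with unit variances under `P`
(every linear combination is centered Gaussian, and each marginal is standard normal).
`Q† = P.withDensity (num/den)` where `num ω = Σ_i 1{σ i · f i ω > b}` and
`den = Σ_i P(σ i · f i > b)`.  If `σ' ≤ σ` pointwise and `max σ' < max σ`, then for some
`ε > 0` the ratio  `E^{Q†}[(dP/dQ†)² ; max_i σ' i · f i > b] / w_{σ',0}(b)^{2-ε}`
tends to infinity as `b → ∞`. -/
theorem nonuniform_efficiency_part_i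
    {Ω : Type*} [MeasurableSpace Ω] (P : Measure Ω) [IsProbabilityMeasure P]
    {ι : Type*} [Fintype ι] [Nonempty ι]
    (f : ι → Ω → ℝ)
    (hmeas : ∀ i, Measurable (f i))
    (hGauss : ∀ c : ι → ℝ, ∃ v : NNReal,
      Measure.map (fun ω => ∑ i, c i * f i ω) P = gaussianReal 0 v)
    (hstd : ∀ i, Measure.map (f i) P = gaussianReal 0 1)
    (σ σ' : ι → ℝ)
    (hσpos : ∀ i, 0 < σ i) (hσ'pos : ∀ i, 0 < σ' i)
    (hle : ∀ i, σ' i ≤ σ i)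
    (hmax : Finset.univ.sup' Finset.univ_nonempty σ' <
      Finset.univ.sup' Finset.univ_nonempty σ) :
    ∃ ε > (0 : ℝ), Tendsto
      (fun b : ℝ =>
        (∫ ω in {ω | ∃ i, σ' i * f i ω > b},
            ((∑ i, (P {ω' | σ i * f i ω' > b}).toReal) /
              (∑ i, if σ i * f i ω > b then (1 : ℝ) else 0)) ^ 2
          ∂(P.withDensity fun ω =>
              ENNReal.ofReal ((∑ i, if σ i * f i ω > b then (1 : ℝ) else 0) /
                (∑ i, (P {ω' | σ i * f i ω' > b}).toReal)))) /
        ((P {ω | ∃ i, σ' i * f i ω > b}).toReal) ^ ((2 : ℝ) - ε))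
      atTop atTop := by
  classical
  set s := Finset.univ.sup' Finset.univ_nonempty σ with hs
  set s' := Finset.univ.sup' Finset.univ_nonempty σ' with hs'
  obtain ⟨j, -, hj⟩ := Finset.exists_mem_eq_sup' Finset.univ_nonempty σ
  obtain ⟨j', -, hj'⟩ := Finset.exists_mem_eq_sup' Finset.univ_nonempty σ'
  rw [← hs] at hj
  rw [← hs'] at hj'
  have hs'pos : 0 < s' := hj' ▸ hσ'pos j'
  have hspos : 0 < s := hs'pos.trans hmax
  have hle' : ∀ i, σ' i ≤ s' := fun i => Finset.le_sup' σ' (Finset.mem_univ i)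
  obtain ⟨c, hc, hlow⟩ := aux_lower
  set r := s' ^ 2 / s ^ 2 with hr
  have hr0 : 0 < r := by positivity
  have hr1 : r < 1 := by
    rw [hr, div_lt_one (by positivity)]
    gcongr
  set p := (1 + r) / 2 with hp
  have hp0 : 0 < p := by positivity
  set k := (p - r) / (2 * s' ^ 2) with hk
  have hk0 : 0 < k := by
    apply div_pos _ (by positivity)
    rw [hp]
    linarith
  have hkk : k + 1 / (2 * s ^ 2) = p / (2 * s' ^ 2) := by
    rw [hk, hr]
    field_simp
    ring
  set M : ℝ := (Fintype.card ι : ℝ) with hM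
  have hM0 : 0 < M := by
    rw [hM]
    exact_mod_cast Fintype.card_pos
  refine ⟨1 - p, by rw [hp]; linarith, ?_⟩
  have hT := (Real.tendsto_exp_atTop.comp (aux_tendsto k s hk0)).const_mul_atTop
    (show 0 < c / (M * M ^ p) by positivity)
  refine tendsto_atTop_mono' _ ?_ hT
  filter_upwards [eventually_gt_atTop 0] with b hb
  set D := ∑ i, (P {ω' | σ i * f i ω' > b}).toReal with hD
  set A := {ω | ∃ i, σ' i * f i ω > b} with hA
  have hAm : MeasurableSet A := by
    have : A = ⋃ i, {ω | b < σ' i * f i ω} := by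
      ext ω
      simp [hA]
    rw [this]
    exact MeasurableSet.iUnion fun i => measurableSet_lt measurable_const ((hmeas i).const_mul _)
  have hDlow : c * Real.exp (-((b / s + 1) ^ 2 / 2)) ≤ D := by
    refine (hlow (b / s) (by positivity)).trans ?_
    rw [hj, ← aux_prob P (f j) (hmeas j) (hstd j) (σ j) b (hσpos j)]
    exact Finset.single_le_sum (f := fun i => (P {ω' | σ i * f i ω' > b}).toReal)
      (fun i _ => ENNReal.toReal_nonneg) (Finset.mem_univ j)
  have hD0 : 0 < D := lt_of_lt_of_le (by positivity) hDlow
  have hwup : (P A).toReal ≤ M * Real.exp (-((b / s') ^ 2 / 2)) := by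
    have h1 : A = ⋃ i, {ω | σ' i * f i ω > b} := by
      ext ω
      simp [hA]
    have h2 : P.real A ≤ ∑ i, P.real {ω | σ' i * f i ω > b} := by
      rw [h1]
      exact measureReal_iUnion_fintype_le _
    refine h2.trans ?_
    have h3 : ∀ i ∈ Finset.univ, P.real {ω | σ' i * f i ω > b} ≤ Real.exp (-((b / s') ^ 2 / 2)) := by
      intro i _
      have := aux_prob P (f i) (hmeas i) (hstd i) (σ' i) b (hσ'pos i)
      rw [measureReal_def, this]
      refine (aux_upper _ (div_nonneg hb.le (hσ'pos i).le)).trans ?_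
      have := hle' i
      have := hσ'pos i
      gcongr
    refine (Finset.sum_le_sum h3).trans ?_
    simp [hM]
  have hw0 : 0 < (P A).toReal := by
    have h1 := hlow (b / σ' j') (div_nonneg hb.le (hσ'pos j').le)
    rw [← aux_prob P (f j') (hmeas j') (hstd j') (σ' j') b (hσ'pos j')] at h1
    refine lt_of_lt_of_le (lt_of_lt_of_le (by positivity) h1) ?_
    exact measureReal_mono (μ := P) (fun ω hω => ⟨j', hω⟩)
  have hI := aux_integral P A hAm (fun ω => ∑ i, if σ i * f i ω > b then (1 : ℝ) else 0)
    (Finset.measurable_sum _ fun i _ => Measurable.ite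
      (measurableSet_lt measurable_const ((hmeas i).const_mul _)) measurable_const measurable_const)
    D M hD0 ?_ ?_
  · rw [le_div_iff₀ (by positivity)]
    refine le_trans ?_ hI
    have e : (2 : ℝ) - (1 - p) = p + 1 := by ring
    rw [e, Real.rpow_add_one hw0.ne', ← mul_assoc]
    refine mul_le_mul_of_nonneg_right ?_ hw0.le
    have h4 : (P A).toReal ^ p ≤ M ^ p * Real.exp (-(p / (2 * s' ^ 2) * b ^ 2)) := by
      refine (Real.rpow_le_rpow hw0.le hwup hp0.le).trans (le_of_eq ?_)
      rw [Real.mul_rpow hM0.le (Real.exp_pos _).le, ← Real.exp_mul]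
      congr 2
      field_simp
    have h5 : 0 < M ^ p := by positivity
    simp only [Function.comp]
    rw [hkk, sub_eq_add_neg, Real.exp_add]
    calc _ ≤ c / (M * M ^ p) * (Real.exp (p / (2 * s' ^ 2) * b ^ 2) *
            Real.exp (-((b / s + 1) ^ 2 / 2))) *
            (M ^ p * Real.exp (-(p / (2 * s' ^ 2) * b ^ 2))) := by
          gcongr
      _ = c * Real.exp (-((b / s + 1) ^ 2 / 2)) / M := by
          rw [Real.exp_neg (p / (2 * s' ^ 2) * b ^ 2)]
          have := (Real.exp_pos (p / (2 * s' ^ 2) * b ^ 2)).ne'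
          generalize Real.exp (p / (2 * s' ^ 2) * b ^ 2) = E at *
          generalize M ^ p = F at *
          field_simp
      _ ≤ D / M := by gcongr
  · rintro ω ⟨i, hi⟩
    have hf0 : 0 < f i ω := by
      have h6 : 0 < σ' i * f i ω := hb.trans hi
      exact (pos_iff_pos_of_mul_pos h6).1 (hσ'pos i)
    have h7 : σ i * f i ω > b := lt_of_lt_of_le hi (mul_le_mul_of_nonneg_right (hle i) hf0.le)
    have h8 := Finset.single_le_sum (f := fun i => if σ i * f i ω > b then (1 : ℝ) else 0)
      (fun i _ => by positivity) (Finset.mem_univ i)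
    simpa [h7] using h8
  · intro ω
    refine (Finset.sum_le_sum (g := fun _ => (1 : ℝ)) fun i _ => ?_).trans ?_
    · split_ifs <;> norm_num
    · simp [hM]
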